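/- arXiv:cs/0609076 — 2 statements merged into one kernel-verified Lean document; each statement's English description precedes it below -/
import Mathlib

section
/- Let n ≥ 1 and let c₁ ≥ c₂ ≥ ⋯ ≥ c_j ≥ 1 be integers with c₁ + c₂ + ⋯ + c_j = n. The number of noncrossing partitions of an n-element totally ordered set into j classes whose multiset of class sizes is {c₁,…,c_j} equals n(n-1)⋯(n-j+2) / f(c₁,…,c_j), where f(c₁,…,c_j) = ∏_{k≥1} n_k! and n_k is the number of indices r with c_r = k. -/
/-- A partition of the totally ordered set `Fin n` is noncrossing if there are no
`p₁ < q₁ < p₂ < q₂` with `p₁, p₂` in one class and `q₁, q₂` in a different class. -/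
def IsNoncrossing {n : ℕ} (P : Finpartition (Finset.univ : Finset (Fin n))) : Prop :=
  ¬ ∃ p₁ q₁ p₂ q₂ : Fin n, p₁ < q₁ ∧ q₁ < p₂ ∧ p₂ < q₂ ∧
      ∃ B ∈ P.parts, ∃ C ∈ P.parts, B ≠ C ∧ p₁ ∈ B ∧ p₂ ∈ B ∧ q₁ ∈ C ∧ q₂ ∈ C

/-- `f(c₁,…,c_j) = ∏_{k ≥ 1} n_k!` where `n_k` is the multiplicity of `k` in the
multiset of class sizes. -/
def fMult (m : Multiset ℕ) : ℕ := m.toFinset.prod fun k => (m.count k).factorial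

/-- The multiset of class sizes of a partition. -/
def partSizes {n : ℕ} (P : Finpartition (Finset.univ : Finset (Fin n))) : Multiset ℕ :=
  P.parts.val.map Finset.card

/-!
Label the classes by the indices of their prescribed sizes. A partition with these sizes is the
fiber partition of as many labellings as there are permutations of the labels preserving the sizes,
namely `f(c₁,…,c_j)`, so it suffices to count the noncrossing labellings. Read such a labelling as
a word and build it letter by letter. The next letter is either a new one or an old one that is not
used up, and in the latter case it must be the most recent such letter: any other choice would
close off a class that is still incomplete. Hence, if `N` positions are left, of which `m` belong
to old letters, and `k` letters are new, then the number of completions satisfies a ballot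
recurrence, whose solution is `(m + 1) / (N + 1) · (N + 1) N ⋯ (N - k + 2)`. For the empty word,
where `m = 0`, `N = n` and `k = j`, this is `n (n - 1) ⋯ (n - j + 2)`.
-/

open Finset

section Words

variable {α : Type*} [DecidableEq α] {c : α → ℕ} {l p : List α} {a b : α}

/-- A word, written with its most recent letter first, that can still be completed to a word
without crossings containing each letter `a` exactly `c a` times. Using `a` again closes off the
letters that came after an earlier `a`, so these must have been used up. -/
inductive IsExtendable (c : α → ℕ) : List α → Prop
  | nil : IsExtendable c []
  | cons {a : α} {l : List α} (hl : IsExtendable c l) (hlt : l.count a < c a)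
      (hcl : ∀ b, b ≠ a → [b, a].Sublist l → l.count b = c b) : IsExtendable c (a :: l)

namespace IsExtendable

theorem of_append {t : List α} (h : IsExtendable c (t ++ l)) : IsExtendable c l := by
  induction t with
  | nil => exact h
  | cons a t ih => cases h with | cons hl => exact ih hl

theorem count_lt (h : IsExtendable c (a :: l)) : l.count a < c a := by
  cases h with | cons _ hlt => exact hlt

theorem count_le (h : IsExtendable c l) (a : α) : l.count a ≤ c a := by
  induction h with
  | nil => simp
  | @cons b l _ hlt _ ih =>
    obtain rfl | hne := eq_or_ne b a
    · rwa [List.count_cons_self]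
    · rwa [List.count_cons_of_ne hne]

theorem count_eq_of_sublist (h : IsExtendable c l) (hab : a ≠ b) (hs : [a, b, a].Sublist l) :
    l.count b = c b := by
  induction h with
  | nil => simp at hs
  | @cons x l _ hlt hcl ih =>
    obtain hs | ⟨rfl, hs'⟩ := List.cons_sublist_cons'.1 hs
    · have hb := ih hs
      have hxb : x ≠ b := by
        rintro rfl
        exact hlt.ne hb
      rwa [List.count_cons_of_ne hxb]
    · rw [List.count_cons_of_ne hab]
      exact hcl b hab.symm hs'

theorem not_sublist (h : IsExtendable c l) (hab : a ≠ b) : ¬ [a, b, a, b].Sublist l := by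
  intro hs
  induction h with
  | nil => simp at hs
  | cons hl hlt _ ih =>
    obtain hs | ⟨rfl, hs'⟩ := List.cons_sublist_cons'.1 hs
    · exact ih hs
    · exact hlt.ne (hl.count_eq_of_sublist hab.symm hs')

theorem cons_of_notMem (h : IsExtendable c l) (ha : a ∉ l) (hc : 0 < c a) :
    IsExtendable c (a :: l) :=
  h.cons (by rwa [List.count_eq_zero_of_not_mem ha]) fun _ _ hs => absurd (hs.subset (by simp)) ha

theorem cons_of_append {u v : List α} (h : IsExtendable c (u ++ a :: v))
    (hu : ∀ b ∈ u, (u ++ a :: v).count b = c b) (ha : (u ++ a :: v).count a < c a) :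
    IsExtendable c (a :: (u ++ a :: v)) := by
  refine h.cons ha fun b hba hs => ?_
  by_cases hbu : b ∈ u
  · exact hu b hbu
  have hbv : [b, a].Sublist v := by
    obtain ⟨_ | ⟨x, l₁⟩, l₂, hl, h₁, h₂⟩ := List.sublist_append_iff.1 hs
    · rw [List.nil_append] at hl
      obtain h₂ | ⟨hab, -⟩ := List.cons_sublist_cons'.1 (hl ▸ h₂)
      · exact h₂
      · exact absurd hab hba
    · obtain ⟨rfl, -⟩ := List.cons.inj hl
      exact absurd (h₁.subset (by simp)) hbu
  exact h.count_eq_of_sublist hba.symm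
    ((hbv.cons_cons a).trans (List.sublist_append_right u _))

theorem eq_of_cons_append {u v : List α} (h : IsExtendable c (b :: (u ++ a :: v)))
    (hb : b ∈ u ++ a :: v) (hu : ∀ x ∈ u, (u ++ a :: v).count x = c x)
    (ha : (u ++ a :: v).count a < c a) : b = a := by
  cases h with | cons _ hlt hcl =>
  by_contra hne
  have hbu : b ∉ u := fun hbu => hlt.ne (hu b hbu)
  have hbv : b ∈ v := by simpa [hbu, hne] using hb
  exact ha.ne <| hcl a (Ne.symm hne) <|
    ((List.singleton_sublist.2 hbv).cons_cons a).trans (List.sublist_append_right u _)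

/-- The only old letter that may be used again is the most recent one that is not used up. -/
theorem existsUnique_cons (h : IsExtendable c l) (hl : ∃ a ∈ l, l.count a < c a) :
    ∃! a, a ∈ l ∧ IsExtendable c (a :: l) := by
  obtain ⟨a, hf⟩ := Option.isSome_iff_exists.1
    ((List.find?_isSome (p := fun a => decide (l.count a < c a)) (xs := l)).2 (by simpa using hl))
  obtain ⟨ha, u, v, rfl, hu⟩ := List.find?_eq_some_iff_append.1 hf
  simp only [decide_eq_true_eq] at ha
  have hu' : ∀ b ∈ u, (u ++ a :: v).count b = c b := fun b hb =>
    (h.count_le b).antisymm (by simpa using hu b hb)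
  exact ⟨a, ⟨by simp, h.cons_of_append hu' ha⟩, fun b hb => hb.2.eq_of_cons_append hb.1 hu' ha⟩

end IsExtendable

theorem isExtendable_iff_of_count_eq (hl : ∀ a, l.count a = c a) :
    IsExtendable c l ↔ ∀ a b, a ≠ b → ¬ [a, b, a, b].Sublist l := by
  refine ⟨fun h a b hab => h.not_sublist hab, fun h => ?_⟩
  suffices ∀ t u, t ++ u = l → IsExtendable c u from this [] l rfl
  intro t u htu
  induction u generalizing t with
  | nil => exact .nil
  | cons a u ih =>
    have hcount (b : α) : t.count b + (a :: u).count b = c b := by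
      rw [← List.count_append, htu, hl]
    refine (ih (t ++ [a]) (by simpa using htu)).cons ?_ fun b hba hs => ?_
    · have := hcount a
      rw [List.count_cons_self] at this
      omega
    · by_contra hne
      have hbt : b ∈ t := by
        have := hcount b
        rw [List.count_cons_of_ne hba.symm] at this
        exact List.count_pos_iff.1 (by omega)
      refine h b a hba (htu ▸ ?_)
      exact (List.singleton_sublist.2 hbt).append (hs.cons_cons a)

/-- The number of further copies of the letters of `p` that a completion of `p` must contain. It is
meaningful when `p` contains no letter `a` more than `c a` times, the subtraction being truncated
otherwise. -/
def pending (c : α → ℕ) (p : List α) : ℕ := ∑ a ∈ p.toFinset, (c a - p.count a)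

theorem pending_cons_of_mem (ha : a ∈ p) (hlt : p.count a < c a) :
    pending c (a :: p) + 1 = pending c p := by
  have hmem : a ∈ p.toFinset := List.mem_toFinset.2 ha
  rw [pending, pending, List.toFinset_cons, insert_eq_of_mem hmem, ← add_sum_erase _ _ hmem,
    ← add_sum_erase _ _ hmem, List.count_cons_self]
  have hrest : ∑ b ∈ p.toFinset.erase a, (c b - (a :: p).count b) =
      ∑ b ∈ p.toFinset.erase a, (c b - p.count b) :=
    sum_congr rfl fun b hb => by rw [List.count_cons_of_ne (ne_of_mem_erase hb).symm]
  omega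

theorem pending_cons_of_notMem (ha : a ∉ p) (hc : 0 < c a) :
    pending c (a :: p) + 1 = pending c p + c a := by
  have hmem : a ∉ p.toFinset := fun h => ha (List.mem_toFinset.1 h)
  rw [pending, pending, List.toFinset_cons, sum_insert hmem, List.count_cons_self,
    List.count_eq_zero_of_not_mem ha]
  have hrest : ∑ b ∈ p.toFinset, (c b - (a :: p).count b) = ∑ b ∈ p.toFinset, (c b - p.count b) :=
    sum_congr rfl fun b hb => by
      rw [List.count_cons_of_ne (ne_of_mem_of_not_mem hb hmem).symm]
  omega

theorem IsExtendable.pending_eq_zero_iff (h : IsExtendable c p) :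
    pending c p = 0 ↔ ∀ a ∈ p, p.count a = c a := by
  simp only [pending, sum_eq_zero_iff, List.mem_toFinset]
  refine forall₂_congr fun a _ => ?_
  have := h.count_le a
  omega

end Words

section Completions

variable {α β : Type*} [Fintype α] [DecidableEq α] {c : α → ℕ} {p : List α} {N : ℕ}

open Classical in
/-- The ways to complete the word `p` by `N` further letters. As in `IsExtendable`, the most recent
letter comes first. -/
noncomputable def completions (c : α → ℕ) (p : List α) (N : ℕ) : Finset (Fin N → α) :=
  {w | IsExtendable c (List.ofFn w ++ p)}

theorem card_completions_zero (hp : IsExtendable c p) : #(completions c p 0) = 1 := by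
  simp [completions, hp]

theorem ofFn_snoc (w : Fin N → β) (b : β) :
    List.ofFn (Fin.snoc (α := fun _ => β) w b) = List.ofFn w ++ [b] := by
  rw [List.ofFn_succ']
  simp

theorem card_completions_succ : #(completions c p (N + 1)) = ∑ a, #(completions c (a :: p) N) := by
  classical
  simp only [completions, card_filter]
  rw [← (Fin.snocEquiv fun _ => α).sum_comp, Fintype.sum_prod_type]
  refine sum_congr rfl fun a _ => sum_congr rfl fun w _ => if_congr ?_ rfl rfl
  rw [List.append_cons, ← ofFn_snoc]
  rfl

theorem completions_eq_empty (hp : ¬ IsExtendable c p) : completions c p N = ∅ := by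
  classical exact filter_eq_empty_iff.2 fun _ _ h => hp h.of_append

theorem descFactorial_succ_add_mul (n k : ℕ) :
    n.descFactorial (k + 1) + k * n.descFactorial k = n * n.descFactorial k := by
  obtain hk | hk := le_or_gt k n
  · rw [Nat.descFactorial_succ, ← add_mul, Nat.sub_add_cancel hk]
  · rw [Nat.descFactorial_succ, Nat.descFactorial_of_lt hk]
    simp

theorem descFactorial_ballot_recurrence {n m k t : ℕ} (hn : n = m + t) (hk : k = 0 → t = 0) :
    (n + 1) * (m * n.descFactorial k + (k * m + t) * n.descFactorial (k - 1)) =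
      n * ((m + 1) * (n + 1).descFactorial k) := by
  obtain _ | k := k
  · obtain rfl : t = 0 := hk rfl
    obtain rfl : n = m := hn
    simp only [Nat.descFactorial_zero]
    ring
  · have hD := descFactorial_succ_add_mul n k
    have hsum : m * n.descFactorial (k + 1) + ((k + 1) * m + t) * n.descFactorial k =
        n * ((m + 1) * n.descFactorial k) := by
      linear_combination m * hD - n.descFactorial k * hn
    rw [Nat.add_sub_cancel, hsum, Nat.succ_descFactorial_succ]
    ring

theorem sum_card_completions_cons_of_mem (hp : IsExtendable c p) {D : ℕ}
    (h : ∀ a ∈ p, IsExtendable c (a :: p) →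
      (N + 1) * #(completions c (a :: p) N) = (pending c (a :: p) + 1) * D) :
    (N + 1) * ∑ a ∈ p.toFinset, #(completions c (a :: p) N) = pending c p * D := by
  by_cases hpend : ∃ a ∈ p, p.count a < c a
  · obtain ⟨a, ⟨ha, hext⟩, huniq⟩ := hp.existsUnique_cons hpend
    rw [sum_eq_single_of_mem a (List.mem_toFinset.2 ha), h a ha hext,
      pending_cons_of_mem ha hext.count_lt]
    intro b hb hba
    rw [completions_eq_empty fun hext => hba (huniq b ⟨List.mem_toFinset.1 hb, hext⟩), card_empty]
  · push Not at hpend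
    rw [hp.pending_eq_zero_iff.2 fun a ha => (hp.count_le a).antisymm (hpend a ha), zero_mul,
      sum_eq_zero, mul_zero]
    intro a ha
    rw [completions_eq_empty fun hext => hext.count_lt.not_ge (hpend a (List.mem_toFinset.1 ha)),
      card_empty]

theorem card_completions (hc : ∀ a, 0 < c a) (hp : IsExtendable c p)
    (hN : N = pending c p + ∑ a ∈ p.toFinsetᶜ, c a) :
    (N + 1) * #(completions c p N) =
      (pending c p + 1) * (N + 1).descFactorial #p.toFinsetᶜ := by
  induction N generalizing p with
  | zero =>
    obtain ⟨hpend, hsum⟩ := Nat.add_eq_zero_iff.1 hN.symm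
    have hempty : p.toFinsetᶜ = ∅ :=
      eq_empty_of_forall_notMem fun a ha => (hc a).ne' (sum_eq_zero_iff.1 hsum a ha)
    rw [card_completions_zero hp, hpend, hempty, card_empty, Nat.descFactorial_zero]
  | succ N ih =>
    set S := p.toFinsetᶜ with hS
    set m := pending c p
    have hold : (N + 1) * ∑ a ∈ p.toFinset, #(completions c (a :: p) N) =
        m * (N + 1).descFactorial #S := by
      refine sum_card_completions_cons_of_mem hp fun a ha hext => ?_
      have hcompl : (a :: p).toFinsetᶜ = S := by simp [hS, ha]
      have := pending_cons_of_mem ha hext.count_lt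
      rw [ih hext (by rw [hcompl]; omega), hcompl]
    have hnew : ∀ a ∈ S, (N + 1) * #(completions c (a :: p) N) =
        (m + c a) * (N + 1).descFactorial (#S - 1) := by
      intro a haS
      have ha : a ∉ p := by simpa [hS] using haS
      have hcompl : (a :: p).toFinsetᶜ = S.erase a := by
        rw [List.toFinset_cons, compl_insert]
      have hpend := pending_cons_of_notMem ha (hc a)
      have hsum := add_sum_erase S c haS
      rw [ih (hp.cons_of_notMem ha (hc a)) (by rw [hcompl]; omega), hcompl,
        card_erase_of_mem haS, hpend]
    have hrec : (N + 1) * #(completions c p (N + 1)) = m * (N + 1).descFactorial #S +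
        (#S * m + ∑ a ∈ S, c a) * (N + 1).descFactorial (#S - 1) := by
      rw [card_completions_succ, ← sum_add_sum_compl p.toFinset, mul_add, hold, mul_sum,
        sum_congr rfl hnew, ← sum_mul, sum_add_distrib, sum_const, smul_eq_mul]
    refine Nat.eq_of_mul_eq_mul_left N.add_one_pos ?_
    rw [← descFactorial_ballot_recurrence hN fun h => by rw [card_eq_zero.1 h, sum_empty], ← hrec]
    ring

end Completions

section Labellings

variable {α β : Type*} [DecidableEq α] [Fintype β] {c : α → ℕ} {L : β → α}

/-- A labelling has content `c` if it uses each label `a` exactly `c a` times. -/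
def HasContent (c : α → ℕ) (L : β → α) : Prop := ∀ a, #{x | L x = a} = c a

namespace HasContent

theorem surjective (hL : HasContent c L) (hc : ∀ a, 0 < c a) : Function.Surjective L := by
  intro a
  obtain ⟨x, hx⟩ := card_pos.1 ((hc a).trans_eq (hL a).symm)
  exact ⟨x, (mem_filter.1 hx).2⟩

theorem perm_comp_iff (hL : HasContent c L) (σ : Equiv.Perm α) :
    HasContent c (σ ∘ L) ↔ c ∘ σ = c := by
  rw [HasContent, ← σ.forall_congr_right, funext_iff]
  refine forall_congr' fun a => ?_
  simp only [Function.comp_apply, σ.injective.eq_iff, hL a, eq_comm (a := c a)]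

end HasContent

end Labellings

section FiberPartition

theorem exists_equiv_comp_eq {α β γ : Type*} {f : β → α} {g : β → γ} (hf : Function.Surjective f)
    (hg : Function.Surjective g) (h : ∀ x y, f x = f y ↔ g x = g y) : ∃ e : α ≃ γ, e ∘ f = g := by
  refine ⟨(Setoid.quotientKerEquivOfSurjective f hf).symm.trans
    ((Quotient.congrRight h).trans (Setoid.quotientKerEquivOfSurjective g hg)), funext fun x => ?_⟩
  have hx : (Setoid.quotientKerEquivOfSurjective f hf).symm (f x) = Quotient.mk _ x :=
    (Equiv.symm_apply_eq _).2 rfl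
  simp only [Function.comp_apply, Equiv.trans_apply, hx]
  rfl

theorem exists_equiv_comp_eq_of_map_eq {α β γ : Type*} [Fintype α] [Fintype β] {f : α → γ}
    {g : β → γ} (h : Multiset.map f univ.val = Multiset.map g univ.val) :
    ∃ e : α ≃ β, g ∘ e = f := by
  classical
  have hfiber (k : γ) : Nonempty ({a // f a = k} ≃ {b // g b = k}) := by
    have hcount := congrArg (Multiset.count k) h
    rw [Multiset.count_map, Multiset.count_map] at hcount
    rw [← Fintype.card_eq, Fintype.card_subtype, Fintype.card_subtype]
    simpa only [card_def, filter_val, eq_comm] using hcount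
  exact ⟨Equiv.ofFiberEquiv fun k => (hfiber k).some,
    funext (Equiv.ofFiberEquiv_map fun k => (hfiber k).some)⟩

theorem mem_parts_iff_exists_part_eq {β : Type*} [DecidableEq β] {s : Finset β}
    {P : Finpartition s} {B : Finset β} : B ∈ P.parts ↔ ∃ x ∈ s, P.part x = B := by
  refine ⟨fun hB => P.part_surjOn hB, ?_⟩
  rintro ⟨x, hx, rfl⟩
  exact P.part_mem.2 hx

variable {α β : Type*} [DecidableEq α] [Fintype β] [DecidableEq β]

/-- The partition of a finite type into the nonempty fibers of a labelling. -/
def fiberPartition (L : β → α) : Finpartition (univ : Finset β) :=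
  Finpartition.ofSetoid (Setoid.ker L)

theorem part_fiberPartition (L : β → α) (x : β) :
    (fiberPartition L).part x = ({y | L y = L x} : Finset β) := by
  ext y
  rw [fiberPartition, Finpartition.mem_part_ofSetoid_iff_rel, Setoid.ker_def, mem_filter_univ,
    eq_comm]

theorem fiberPartition_eq_iff {L : β → α} {P : Finpartition (univ : Finset β)} :
    fiberPartition L = P ↔ ∀ x y, L x = L y ↔ P.part x = P.part y := by
  have hpart (Q : Finpartition (univ : Finset β)) (x y : β) : Q.part x = Q.part y ↔ x ∈ Q.part y :=
    (Q.mem_part_iff_part_eq_part (mem_univ x) (mem_univ y)).symm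
  constructor
  · rintro rfl x y
    rw [hpart, part_fiberPartition, mem_filter_univ]
  · refine fun h => Finpartition.ext (Finset.ext fun B => ?_)
    have hL (x : β) : (fiberPartition L).part x = P.part x := by
      ext y
      rw [part_fiberPartition, mem_filter_univ, h, hpart]
    simp only [mem_parts_iff_exists_part_eq, mem_univ, true_and, hL]

theorem fiberPartition_comp {γ : Type*} [DecidableEq γ] {f : α → γ} (hf : Function.Injective f)
    (L : β → α) : fiberPartition (f ∘ L) = fiberPartition L :=
  fiberPartition_eq_iff.2 fun x y => by
    rw [Function.comp_apply, Function.comp_apply, hf.eq_iff, ← fiberPartition_eq_iff.1 rfl x y]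

theorem parts_fiberPartition_of_surjective [Fintype α] {L : β → α} (hL : Function.Surjective L) :
    (fiberPartition L).parts = univ.image fun a => ({x | L x = a} : Finset β) := by
  ext B
  simp only [mem_parts_iff_exists_part_eq, part_fiberPartition, mem_image, mem_univ, true_and,
    hL.exists]

theorem HasContent.partSizes_fiberPartition [Fintype α] {n : ℕ} {c : α → ℕ} {L : Fin n → α}
    (hL : HasContent c L) (hc : ∀ a, 0 < c a) :
    partSizes (fiberPartition L) = Multiset.map c univ.val := by
  have hsurj := hL.surjective hc
  have hinj : Function.Injective fun a => ({x | L x = a} : Finset (Fin n)) := by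
    intro a b hab
    obtain ⟨x, rfl⟩ := hsurj a
    have hx : x ∈ ({y | L y = b} : Finset (Fin n)) := hab.subset (by simp)
    exact (mem_filter.1 hx).2
  rw [partSizes, parts_fiberPartition_of_surjective hsurj, image_val_of_injOn hinj.injOn,
    Multiset.map_map]
  exact Multiset.map_congr rfl fun a _ => hL a

variable [Fintype α] {c : α → ℕ} {n : ℕ}

theorem exists_hasContent_fiberPartition_eq {P : Finpartition (univ : Finset (Fin n))}
    (hP : partSizes P = Multiset.map c univ.val) :
    ∃ L : Fin n → α, HasContent c L ∧ fiberPartition L = P := by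
  have hparts : partSizes P = Multiset.map (fun B : P.parts => #B.1) univ.val := by
    rw [partSizes, ← attach_eq_univ, attach_val]
    exact (Multiset.attach_map_val' _ _).symm
  obtain ⟨e, he⟩ := exists_equiv_comp_eq_of_map_eq (hparts.symm.trans hP)
  refine ⟨fun x => e ⟨P.part x, P.part_mem.2 (mem_univ x)⟩, ?_, ?_⟩
  · rw [HasContent, ← e.forall_congr_right]
    intro B
    have hB : ({x | P.part x = B} : Finset (Fin n)) = B := by
      ext x
      rw [mem_filter_univ, P.part_eq_iff_mem B.2]
    simp only [e.injective.eq_iff, Subtype.ext_iff, hB]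
    exact (congrFun he B).symm
  · simp only [fiberPartition_eq_iff, e.injective.eq_iff, Subtype.mk.injEq, implies_true]

theorem fMult_eq_card_perm (c : α → ℕ) :
    fMult (Multiset.map c univ.val) = #{σ : Equiv.Perm α | c ∘ σ = c} := by
  rw [← Fintype.card_subtype, DomMulAct.stabilizer_card', fMult]
  refine prod_congr (by ext; simp) fun k _ => ?_
  rw [Multiset.count_map, Fintype.card_subtype, card_def, filter_val]
  simp only [eq_comm]

open Classical in
theorem card_hasContent_fiberPartition_eq (hc : ∀ a, 0 < c a)
    {P : Finpartition (univ : Finset (Fin n))} (hP : partSizes P = Multiset.map c univ.val) :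
    #{L : Fin n → α | HasContent c L ∧ fiberPartition L = P} =
      fMult (Multiset.map c univ.val) := by
  obtain ⟨L₀, hL₀, rfl⟩ := exists_hasContent_fiberPartition_eq hP
  have hsurj := hL₀.surjective hc
  rw [fMult_eq_card_perm]
  symm
  refine card_bij (fun σ _ => σ ∘ L₀) (fun σ hσ => ?_) (fun σ _ τ _ h => ?_) fun L hL => ?_
  · rw [mem_filter_univ] at hσ ⊢
    exact ⟨(hL₀.perm_comp_iff σ).2 hσ, fiberPartition_comp σ.injective L₀⟩
  · exact Equiv.coe_fn_injective (hsurj.injective_comp_right h)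
  · obtain ⟨hL, hP⟩ := (mem_filter_univ L).1 hL
    obtain ⟨σ, rfl⟩ := exists_equiv_comp_eq hsurj (hL.surjective hc) fun x y => by
      rw [fiberPartition_eq_iff.1 hP x y, fiberPartition_eq_iff.1 rfl x y]
    exact ⟨σ, (mem_filter_univ σ).2 ((hL₀.perm_comp_iff σ).1 hL), rfl⟩

end FiberPartition

section NoncrossingLabellings

theorem sublist_ofFn_iff {α : Type*} {n : ℕ} {l : List α} {L : Fin n → α} :
    l.Sublist (List.ofFn L) ↔ ∃ f : Fin l.length ↪o Fin n, ∀ i, l.get i = L (f i) := by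
  rw [List.sublist_iff_exists_fin_orderEmbedding_get_eq]
  let e : Fin (List.ofFn L).length ≃o Fin n := Fin.castOrderIso List.length_ofFn
  constructor
  · rintro ⟨f, hf⟩
    exact ⟨f.trans e.toOrderEmbedding, fun i => (hf i).trans (List.get_ofFn L _)⟩
  · rintro ⟨f, hf⟩
    exact ⟨f.trans e.symm.toOrderEmbedding, fun i => by rw [hf i, List.get_ofFn]; rfl⟩

variable {α : Type*} [DecidableEq α] {n : ℕ}

theorem count_ofFn (L : Fin n → α) (a : α) : (List.ofFn L).count a = #{x | L x = a} := by
  simpa using (Fin.card_filter_univ_eq_vector_get_eq_count a (List.Vector.ofFn L)).symm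

theorem isNoncrossing_fiberPartition_iff {L : Fin n → α} :
    IsNoncrossing (fiberPartition L) ↔
      ∀ a b, a ≠ b → ¬ [a, b, a, b].Sublist (List.ofFn L) := by
  simp only [sublist_ofFn_iff]
  constructor
  · rintro h a b hab ⟨f, hf⟩
    change Fin 4 ↪o Fin n at f
    refine h ⟨f 0, f 1, f 2, f 3,
      f.strictMono (by decide), f.strictMono (by decide), f.strictMono (by decide),
      _, Finpartition.part_mem _ |>.2 (mem_univ (f 0)),
      _, Finpartition.part_mem _ |>.2 (mem_univ (f 1)), ?_⟩
    have h₀ : a = L (f 0) := hf 0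
    have h₁ : b = L (f 1) := hf 1
    have h₂ : a = L (f 2) := hf 2
    have h₃ : b = L (f 3) := hf 3
    rw [Ne, ← fiberPartition_eq_iff.1 rfl]
    simp [part_fiberPartition, ← h₀, ← h₁, ← h₂, ← h₃, hab]
  · rintro h ⟨p₁, q₁, p₂, q₂, h₁, h₂, h₃, B, hB, C, hC, hBC, hp₁, hp₂, hq₁, hq₂⟩
    obtain ⟨x, -, rfl⟩ := mem_parts_iff_exists_part_eq.1 hB
    obtain ⟨y, -, rfl⟩ := mem_parts_iff_exists_part_eq.1 hC
    rw [Ne, ← fiberPartition_eq_iff.1 rfl] at hBC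
    simp only [part_fiberPartition, mem_filter_univ] at hp₁ hp₂ hq₁ hq₂
    have hmono : StrictMono ![p₁, q₁, p₂, q₂] := by simp [h₁, h₂, h₃]
    refine h _ _ hBC ⟨OrderEmbedding.ofStrictMono _ hmono, ?_⟩
    simp [Fin.forall_fin_succ, hp₁, hp₂, hq₁, hq₂]

variable [Fintype α] {c : α → ℕ}

open Classical in
/-- The labellings of content `c` whose fibers form a noncrossing partition. -/
noncomputable def noncrossingLabellings (c : α → ℕ) (n : ℕ) : Finset (Fin n → α) :=
  {L | HasContent c L ∧ IsNoncrossing (fiberPartition L)}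

theorem mem_noncrossingLabellings {L : Fin n → α} :
    L ∈ noncrossingLabellings c n ↔ HasContent c L ∧ IsNoncrossing (fiberPartition L) := by
  classical exact mem_filter_univ L

theorem noncrossingLabellings_eq_completions (hsum : ∑ a, c a = n) :
    noncrossingLabellings c n = completions c [] n := by
  classical
  ext L
  rw [mem_noncrossingLabellings, isNoncrossing_fiberPartition_iff, completions, mem_filter_univ,
    List.append_nil]
  have hcontent : HasContent c L ↔ ∀ a, (List.ofFn L).count a = c a := by
    simp only [HasContent, count_ofFn]
  rw [hcontent]
  refine ⟨fun ⟨hL, h⟩ => (isExtendable_iff_of_count_eq hL).2 h, fun h => ?_⟩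
  have hlen : ∑ a, (List.ofFn L).count a = ∑ a, c a := by
    rw [hsum]
    simpa using Multiset.sum_count_eq_card (s := univ) (m := (List.ofFn L : Multiset α))
      (fun a _ => mem_univ a)
  have hL (a : α) : (List.ofFn L).count a = c a :=
    (sum_eq_sum_iff_of_le fun a _ => h.count_le a).1 hlen a (mem_univ a)
  exact ⟨hL, (isExtendable_iff_of_count_eq hL).1 h⟩

theorem card_noncrossingLabellings (hn : 1 ≤ n) (hc : ∀ a, 0 < c a) (hsum : ∑ a, c a = n) :
    #(noncrossingLabellings c n) = n.descFactorial (Fintype.card α - 1) := by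
  have hα : Fintype.card α = Fintype.card α - 1 + 1 := by
    have : Nonempty α := by
      refine not_isEmpty_iff.1 fun _ => ?_
      rw [univ_eq_empty, sum_empty] at hsum
      omega
    exact (Nat.sub_add_cancel Fintype.card_pos).symm
  have hcount := card_completions hc .nil (N := n) (by simp [pending, hsum])
  rw [← noncrossingLabellings_eq_completions hsum, List.toFinset_nil, compl_empty, card_univ, hα,
    Nat.succ_descFactorial_succ] at hcount
  simpa [pending] using hcount

theorem card_noncrossingLabellings_eq_mul_fMult (hc : ∀ a, 0 < c a) :
    #(noncrossingLabellings c n) =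
      Nat.card {P : Finpartition (univ : Finset (Fin n)) //
        IsNoncrossing P ∧ partSizes P = Multiset.map c univ.val} *
      fMult (Multiset.map c univ.val) := by
  classical
  have hmaps : Set.MapsTo fiberPartition (noncrossingLabellings c n : Set (Fin n → α))
      ({P | IsNoncrossing P ∧ partSizes P = Multiset.map c univ.val} :
        Finset (Finpartition (univ : Finset (Fin n)))) := by
    intro L hL
    obtain ⟨hL, hnc⟩ := mem_noncrossingLabellings.1 hL
    simpa using ⟨hnc, hL.partSizes_fiberPartition hc⟩
  rw [card_eq_sum_card_fiberwise hmaps, Nat.card_eq_fintype_card, Fintype.card_subtype]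
  refine sum_const_nat fun P hP => ?_
  obtain ⟨hnc, hsizes⟩ := (mem_filter_univ P).1 hP
  rw [← card_hasContent_fiberPartition_eq hc hsizes]
  congr 1
  ext L
  rw [mem_filter, mem_noncrossingLabellings, mem_filter_univ]
  refine ⟨fun h => ⟨h.1.1, h.2⟩, ?_⟩
  rintro ⟨hL, rfl⟩
  exact ⟨⟨hL, hnc⟩, rfl⟩

end NoncrossingLabellings

theorem card_noncrossing_with_sizes_general {ι : Type*} [Fintype ι] {n : ℕ} (hn : 1 ≤ n)
    (c : ι → ℕ) (hpos : ∀ i, 1 ≤ c i) (hsum : ∑ i, c i = n) :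
    (Nat.card {P : Finpartition (univ : Finset (Fin n)) //
        IsNoncrossing P ∧ partSizes P = Multiset.map c univ.val} : ℚ) =
      (n.descFactorial (Fintype.card ι - 1) : ℚ) / (fMult (Multiset.map c univ.val) : ℚ) := by
  classical
  have hf : (fMult (Multiset.map c univ.val) : ℚ) ≠ 0 :=
    Nat.cast_ne_zero.2 (prod_ne_zero_iff.2 fun k _ => Nat.factorial_ne_zero _)
  rw [eq_div_iff hf, ← card_noncrossingLabellings hn hpos hsum,
    card_noncrossingLabellings_eq_mul_fMult hpos, Nat.cast_mul]

/-- The number of noncrossing partitions of an `n`-element totally ordered set into `j`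
classes whose multiset of class sizes is `{c₁ ≥ ⋯ ≥ c_j ≥ 1}` (with `Σ c_r = n`)
equals `n(n-1)⋯(n-j+2) / f(c₁,…,c_j)`. -/
theorem card_noncrossing_with_sizes (n j : ℕ) (hn : 1 ≤ n) (c : Fin j → ℕ)
    (hpos : ∀ r, 1 ≤ c r) (hmono : ∀ r s : Fin j, r ≤ s → c s ≤ c r)
    (hsum : ∑ r, c r = n) :
    (Nat.card {P : Finpartition (Finset.univ : Finset (Fin n)) //
        IsNoncrossing P ∧ partSizes P = Multiset.map c Finset.univ.val} : ℚ) =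
      (Nat.descFactorial n (j - 1) : ℚ) / (fMult (Multiset.map c Finset.univ.val) : ℚ) := by
  simpa only [Fintype.card_fin] using card_noncrossing_with_sizes_general hn c hpos hsum
end

section
/- For every noncrossing partition π of {1,…,n}, if the class-size multiset of π is {c₁,…,c_j} (non-ascending) and the class-size multiset of its Kreweras complement KC(π) is {b₁,…,b_{n-j+1}} (non-ascending), then the number of noncrossing partitions of {1,…,n} with exactly these two data equals n·(n-j)!·(j-1)! / (f(b₁,…,b_{n-j+1})·f(c₁,…,c_j)). -/
/-- Halve an index of the interlaced set `1,1̄,2,2̄,…,n,n̄`. -/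
def half {n : ℕ} (x : Fin (2 * n)) : Fin n := ⟨x.val / 2, by omega⟩

/-- `x` and `y` lie in the same class of the union partition `π ∪ σ` of the interlaced
set, `π` on even positions (original copy), `σ` on odd positions (barred copy). -/
def togetherIn {n : ℕ} (π σ : Finpartition (Finset.univ : Finset (Fin n)))
    (x y : Fin (2 * n)) : Prop :=
  (x.val % 2 = 0 ∧ y.val % 2 = 0 ∧ ∃ B ∈ π.parts, half x ∈ B ∧ half y ∈ B) ∨
  (x.val % 2 = 1 ∧ y.val % 2 = 1 ∧ ∃ B ∈ σ.parts, half x ∈ B ∧ half y ∈ B)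

/-- The union `π ∪ σ` is noncrossing on the interlaced `2n`-element set. -/
def InterlacedNoncrossing {n : ℕ}
    (π σ : Finpartition (Finset.univ : Finset (Fin n))) : Prop :=
  ¬ ∃ p₁ q₁ p₂ q₂ : Fin (2 * n), p₁ < q₁ ∧ q₁ < p₂ ∧ p₂ < q₂ ∧
      togetherIn π σ p₁ p₂ ∧ togetherIn π σ q₁ q₂ ∧ ¬ togetherIn π σ p₁ q₁

/-- `σ'` refines `σ`. -/
def Refines {n : ℕ} (σ' σ : Finpartition (Finset.univ : Finset (Fin n))) : Prop :=
  ∀ B ∈ σ'.parts, ∃ C ∈ σ.parts, B ⊆ C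

/-- `σ` is the Kreweras complement of `π`: the biggest noncrossing partition of the
barred copy whose union with `π` is noncrossing on the interlaced set. -/
def IsKreweras {n : ℕ} (π σ : Finpartition (Finset.univ : Finset (Fin n))) : Prop :=
  IsNoncrossing σ ∧ InterlacedNoncrossing π σ ∧
    ∀ σ' : Finpartition (Finset.univ : Finset (Fin n)),
      IsNoncrossing σ' → InterlacedNoncrossing π σ' → Refines σ' σ

/-!
Label the classes of a noncrossing partition and those of its Kreweras complement. Applying the
Kreweras complement twice rotates the partition, so the number of labelled pairs is symmetric in
the two families of prescribed class sizes, and pairs may be rotated simultaneously. There are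
`n + 1` classes on `2 n` points, so some class is a singleton; by rotation it may be placed at the
last point, and deleting that point removes the singleton and shortens one class of the other
partition. Induction on `n` gives the number `n (j - 1)! (n - j)!` of labelled pairs, and a pair of
partitions with class sizes `c` and `b` has `f(c) f(b)` labellings with prescribed sizes.
-/

section Labelling

variable {α J K : Type*} [LinearOrder α]

/-- In the interlaced cyclic order `1, 1̄, 2, 2̄, …` the chord joining the unbarred points `x` and
`y` does not cross the chord joining the barred points `ī` and `j̄`; `x ≤ i` says that `x` precedes
`ī`. For four distinct points of `α` it says equally well that the chords `x y` and `i j` do not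
cross. -/
def Uncrossed (x y i j : α) : Prop :=
  (x ≤ i ↔ x ≤ j) ↔ (y ≤ i ↔ y ≤ j)

/-- The fibres of `f` form a noncrossing partition. Partitions are encoded by labellings, whose
labels keep track of individual classes in the counting argument. -/
def IsNoncrossingLabelling (f : α → J) : Prop :=
  ∀ p q r s, p < q → q < r → r < s → f p = f r → f q = f s → f p = f q

/-- The relation `ī ~ j̄` whose classes are those of the Kreweras complement of the partition into
fibres of `f`: the chord `ī j̄` crosses no chord joining two points of the same fibre. -/
def krewerasSetoid (f : α → J) : Setoid α where
  r i j := ∀ x y, f x = f y → Uncrossed x y i j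
  iseqv :=
    { refl := fun i x y _ => by simp [Uncrossed]
      symm := fun h x y hxy => by
        have := h x y hxy
        unfold Uncrossed at *
        tauto
      trans := fun h₁ h₂ x y hxy => by
        have := h₁ x y hxy
        have := h₂ x y hxy
        unfold Uncrossed at *
        tauto }

/-- The fibres of `f` form a noncrossing partition, and those of `g` its Kreweras complement. -/
structure IsComplementaryPair (f : α → J) (g : α → K) : Prop where
  noncrossing : IsNoncrossingLabelling f
  eq_iff : ∀ i j, g i = g j ↔ krewerasSetoid f i j

theorem krewerasSetoid_iff {f : α → J} {i j : α} :
    krewerasSetoid f i j ↔ ∀ x y, f x = f y → Uncrossed x y i j :=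
  Iff.rfl

theorem uncrossed_comm_left {x y i j : α} : Uncrossed x y i j ↔ Uncrossed y x i j :=
  Iff.comm

theorem uncrossed_iff_mem_Ico {x y i j : α} (hxy : x ≤ y) :
    Uncrossed x y i j ↔ (i ∈ Set.Ico x y ↔ j ∈ Set.Ico x y) := by
  have : y ≤ i → x ≤ i := hxy.trans
  have : y ≤ j → x ≤ j := hxy.trans
  simp only [Uncrossed, Set.mem_Ico, ← not_le]
  grind

theorem IsNoncrossingLabelling.mem_Ico {f : α → J} (hf : IsNoncrossingLabelling f) {x y z w : α}
    (hxy : f x = f y) (hzw : f z = f w) (hne : f x ≠ f z) (hz : z ∈ Set.Ico x y) :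
    w ∈ Set.Ico x y := by
  have hxz : x < z := hz.1.lt_of_ne (ne_of_apply_ne f hne)
  refine ⟨le_of_not_gt fun hwx => hne ?_, lt_of_not_ge fun hyw => hne ?_⟩
  · rw [hzw, hf w x z y hwx hxz hz.2 hzw.symm hxy]
  · have hyw' : y < w := hyw.lt_of_ne (ne_of_apply_ne f fun h => hne (by rw [hxy, h, hzw]))
    exact hf x z y w hxz hz.2 hyw' hxy hzw

theorem IsNoncrossingLabelling.uncrossed {f : α → J} (hf : IsNoncrossingLabelling f) {x y z w : α}
    (hxy : f x = f y) (hzw : f z = f w) (hne : f x ≠ f z) : Uncrossed x y z w := by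
  wlog hle : x ≤ y generalizing x y
  · exact uncrossed_comm_left.1 (this hxy.symm (hxy ▸ hne) (le_of_not_ge hle))
  · rw [uncrossed_iff_mem_Ico hle]
    exact ⟨hf.mem_Ico hxy hzw hne, hf.mem_Ico hxy hzw.symm (hzw ▸ hne)⟩

theorem isNoncrossingLabelling_of_eq_iff {f : α → J} {g : α → K}
    (h : ∀ i j, g i = g j ↔ krewerasSetoid f i j) : IsNoncrossingLabelling g := by
  refine fun p q r s hpq hqr hrs hpr hqs => (h p q).2 fun x y hxy => ?_
  have hpr := (h p r).1 hpr x y hxy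
  have hqs := (h q s).1 hqs x y hxy
  unfold Uncrossed at *
  have := hpq.trans hqr
  have := hqr.trans hrs
  grind

theorem IsComplementaryPair.congr {J' K' : Type*} {f : α → J} {g : α → K} {f' : α → J'}
    {g' : α → K'} (h : IsComplementaryPair f g) (hf : ∀ x y, f x = f y ↔ f' x = f' y)
    (hg : ∀ x y, g x = g y ↔ g' x = g' y) : IsComplementaryPair f' g' where
  noncrossing := by simpa only [IsNoncrossingLabelling, hf] using h.noncrossing
  eq_iff i j := by
    rw [← hg, h.eq_iff]
    exact forall₂_congr fun x y => by rw [hf]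

end Labelling

/-- The witnesses `b` and `m` are the cyclic neighbours of `y` in `S`. -/
theorem exists_cyclic_neighbours {α : Type*} [LinearOrder α] {S : Finset α} (hS : S.Nonempty)
    {y : α} (hy : y ∉ S) :
    ∃ m ∈ S, ∃ b ∈ S, ∀ z ∈ S, (m ≤ z ↔ z ≤ b) ↔ ¬ (m ≤ y ↔ y ≤ b) := by
  by_cases h : (S.filter (· < y)).Nonempty ∧ (S.filter (y < ·)).Nonempty
  · obtain ⟨b, hb, hbmax⟩ := Finset.exists_max_image _ id h.1
    obtain ⟨m, hm, hmmin⟩ := Finset.exists_min_image _ id h.2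
    simp only [Finset.mem_filter, id_eq, and_imp] at hb hbmax hm hmmin
    refine ⟨m, hm.1, b, hb.1, fun z hz => ?_⟩
    have hzb := hbmax z hz
    have hmz := hmmin z hz
    rcases lt_or_gt_of_ne (ne_of_mem_of_not_mem hz hy) with hzy | hyz <;> grind
  · simp only [not_and_or, Finset.not_nonempty_iff_eq_empty, Finset.filter_eq_empty_iff] at h
    refine ⟨S.min' hS, S.min'_mem hS, S.max' hS, S.max'_mem hS, fun z hz => ?_⟩
    have := S.min'_le z hz
    have := S.le_max' z hz
    have := ne_of_mem_of_not_mem (S.min'_mem hS) hy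
    have := ne_of_mem_of_not_mem (S.max'_mem hS) hy
    have := h.imp (fun h => h (S.min'_mem hS)) (fun h => h (S.max'_mem hS))
    grind

section Duality

variable {n : ℕ} {J K : Type*}

theorem finRotate_le_iff {i z : Fin (n + 1)} :
    finRotate (n + 1) i ≤ z ↔ (z ≤ i ↔ i = Fin.last n) := by
  rcases eq_or_ne i (Fin.last n) with rfl | hi
  · simp [Fin.le_last]
  · rw [iff_false_right hi, Fin.le_def, coe_finRotate_of_ne_last hi, not_le, Fin.lt_def]
    rfl

/-- The points `z` with `finRotate i ≤ z ↔ z ≤ b` are those on one side of the chord `ī b̄`. -/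
theorem uncrossed_iff_finRotate_le {z w i b : Fin (n + 1)} :
    Uncrossed z w i b ↔
      ((finRotate (n + 1) i ≤ z ↔ z ≤ b) ↔ (finRotate (n + 1) i ≤ w ↔ w ≤ b)) := by
  simp only [Uncrossed, finRotate_le_iff]
  grind

theorem uncrossed_finRotate_finRotate {x y i j : Fin (n + 1)} :
    Uncrossed (finRotate (n + 1) x) (finRotate (n + 1) y) i j ↔ Uncrossed i j x y := by
  simp only [Uncrossed, finRotate_le_iff]
  grind

/-- `finRotate i` is the cyclic successor of `b` in their common class, so the chord `ī b̄` cuts off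
an arc free of that class. -/
theorem IsNoncrossingLabelling.krewerasSetoid_of_side_const {f : Fin (n + 1) → J}
    (hf : IsNoncrossingLabelling f) {i b : Fin (n + 1)} (hib : f (finRotate (n + 1) i) = f b)
    {s : Prop} (hside : ∀ z, f z = f b → ((finRotate (n + 1) i ≤ z ↔ z ≤ b) ↔ s)) :
    krewerasSetoid f i b := by
  intro z w hzw
  rw [uncrossed_iff_finRotate_le]
  by_cases hz : f z = f b
  · rw [hside z hz, hside w (hzw.symm.trans hz)]
  · have hzb : z ≠ b := ne_of_apply_ne f hz
    have hwb : w ≠ b := ne_of_apply_ne f (hzw ▸ hz)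
    have := hf.uncrossed hib hzw (by rw [hib]; exact Ne.symm hz)
    rw [Uncrossed, ← not_lt (a := z) (b := b), ← not_lt (a := w) (b := b)] at this
    rw [hzb.le_iff_lt, hwb.le_iff_lt]
    grind

theorem IsNoncrossingLabelling.exists_not_uncrossed {f : Fin (n + 1) → J}
    (hf : IsNoncrossingLabelling f) {x y : Fin (n + 1)} (hne : f x ≠ f y) :
    ∃ i j, krewerasSetoid f i j ∧ ¬ Uncrossed x y i j := by
  classical
  obtain ⟨m, hm, b, hb, hside⟩ := exists_cyclic_neighbours (S := {z | f z = f x}) (y := y)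
    ⟨x, by simp⟩ (by simpa using hne.symm)
  simp only [Finset.mem_filter_univ] at hm hb hside
  obtain ⟨i, rfl⟩ := (finRotate (n + 1)).surjective m
  refine ⟨i, b, hf.krewerasSetoid_of_side_const (hm.trans hb.symm) fun z hz =>
    hside z (hz.trans hb), ?_⟩
  rw [uncrossed_iff_finRotate_le, hside x rfl]
  exact not_iff_self

namespace IsComplementaryPair

variable {f : Fin (n + 1) → J} {g : Fin (n + 1) → K}

/-- The Kreweras complement is an involution up to rotation. -/
theorem dual (h : IsComplementaryPair f g) : IsComplementaryPair g (f ∘ finRotate (n + 1)) where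
  noncrossing := isNoncrossingLabelling_of_eq_iff h.eq_iff
  eq_iff x y := by
    refine ⟨fun hxy i j hij => uncrossed_finRotate_finRotate.1 ((h.eq_iff i j).1 hij _ _ hxy),
      fun hxy => ?_⟩
    by_contra hne
    obtain ⟨i, j, hij, hcross⟩ := h.noncrossing.exists_not_uncrossed hne
    exact hcross (uncrossed_finRotate_finRotate.2 (hxy i j ((h.eq_iff i j).2 hij)))

theorem comp_finCycle (h : IsComplementaryPair f g) (k : Fin (n + 1)) :
    IsComplementaryPair (f ∘ finCycle k) (g ∘ finCycle k) := by
  rw [finCycle_eq_finRotate_iterate]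
  induction k.1 with
  | zero => exact h
  | succ k ih =>
    rw [Function.iterate_succ, ← Function.comp_assoc, ← Function.comp_assoc]
    exact ih.dual.dual

end IsComplementaryPair

section Snoc

variable {f : Fin (n + 1) → J} {a : J}

theorem isNoncrossingLabelling_snoc_iff (ha : a ∉ Set.range f) :
    IsNoncrossingLabelling (Fin.snoc f a : Fin (n + 2) → J) ↔ IsNoncrossingLabelling f := by
  replace ha : ∀ x, f x ≠ a := fun x hx => ha ⟨x, hx⟩
  simp [IsNoncrossingLabelling, Fin.forall_fin_succ' (n := n + 1), ha, fun x => (ha x).symm,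
    (Fin.le_last _).not_gt]

theorem krewerasSetoid_snoc_castSucc_castSucc (ha : a ∉ Set.range f) {i j : Fin (n + 1)} :
    krewerasSetoid (Fin.snoc f a : Fin (n + 2) → J) i.castSucc j.castSucc ↔
      krewerasSetoid f i j := by
  replace ha : ∀ x, f x ≠ a := fun x hx => ha ⟨x, hx⟩
  simp [krewerasSetoid_iff, Uncrossed, Fin.forall_fin_succ' (n := n + 1), ha,
    fun x => (ha x).symm]

theorem krewerasSetoid_snoc_castSucc_last (ha : a ∉ Set.range f) {i : Fin (n + 1)} :
    krewerasSetoid (Fin.snoc f a : Fin (n + 2) → J) i.castSucc (Fin.last (n + 1)) ↔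
      krewerasSetoid f i (Fin.last n) := by
  replace ha : ∀ x, f x ≠ a := fun x hx => ha ⟨x, hx⟩
  simp [krewerasSetoid_iff, Uncrossed, Fin.forall_fin_succ' (n := n + 1), ha,
    fun x => (ha x).symm, Fin.le_last]

theorem isComplementaryPair_snoc_iff {g : Fin (n + 1) → K} {b : K} (ha : a ∉ Set.range f) :
    IsComplementaryPair (Fin.snoc f a : Fin (n + 2) → J) (Fin.snoc g b : Fin (n + 2) → K) ↔
      IsComplementaryPair f g ∧ g (Fin.last n) = b := by
  constructor
  · intro h
    have heq (i j : Fin (n + 1)) : g i = g j ↔ krewerasSetoid f i j := by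
      rw [← krewerasSetoid_snoc_castSucc_castSucc ha, ← h.eq_iff, Fin.snoc_castSucc,
        Fin.snoc_castSucc]
    have hlast : g (Fin.last n) = b := by
      have := (h.eq_iff _ _).2 ((krewerasSetoid_snoc_castSucc_last ha).2 ((heq _ _).1 rfl))
      rwa [Fin.snoc_castSucc, Fin.snoc_last] at this
    exact ⟨⟨(isNoncrossingLabelling_snoc_iff ha).1 h.noncrossing, heq⟩, hlast⟩
  · rintro ⟨h, rfl⟩
    refine ⟨(isNoncrossingLabelling_snoc_iff ha).2 h.noncrossing, ?_⟩
    have hlast (i : Fin (n + 1)) : g i = g (Fin.last n) ↔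
        krewerasSetoid (Fin.snoc f a : Fin (n + 2) → J) i.castSucc (Fin.last (n + 1)) := by
      rw [krewerasSetoid_snoc_castSucc_last ha, h.eq_iff]
    have hlast' (i : Fin (n + 1)) : g (Fin.last n) = g i ↔
        krewerasSetoid (Fin.snoc f a : Fin (n + 2) → J) (Fin.last (n + 1)) i.castSucc := by
      rw [eq_comm, hlast, Setoid.comm']
    simp only [Fin.forall_fin_succ' (n := n + 1), Fin.snoc_castSucc, Fin.snoc_last,
      krewerasSetoid_snoc_castSucc_castSucc ha, h.eq_iff, ← hlast, ← hlast', implies_true,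
      true_and, true_iff]
    exact Setoid.refl' _ _

end Snoc

end Duality

section Counting

open Finset
open scoped Nat

section Content

variable {n : ℕ} {L : Type*}

/-- The multiset of labels used by `f`. -/
def content (f : Fin n → L) : Multiset L :=
  univ.val.map f

theorem mem_content {f : Fin n → L} {l : L} : l ∈ content f ↔ l ∈ Set.range f := by
  simp [content]

theorem count_content [DecidableEq L] (f : Fin n → L) (l : L) :
    (content f).count l = #{x | f x = l} := by
  simp only [content, Multiset.count_map, eq_comm (a := l)]
  rfl

theorem content_comp_equiv (f : Fin n → L) (e : Equiv.Perm (Fin n)) :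
    content (f ∘ e) = content f := by
  rw [content, ← Multiset.map_map, Multiset.map_univ_val_equiv, content]

theorem content_snoc (f : Fin n → L) (a : L) :
    content (Fin.snoc f a : Fin (n + 1) → L) = a ::ₘ content f := by
  rw [content, Fin.univ_castSuccEmb, cons_val, Multiset.map_cons, map_val, Multiset.map_map]
  simp [content, Function.comp_def]

end Content

theorem exists_eq_cons_notMem {L : Type*} [DecidableEq L] {s : Multiset L}
    (hs : Multiset.card s < 2 * #s.toFinset) :
    ∃ a t, a ∉ t ∧ s = a ::ₘ t := by
  by_contra! h
  refine hs.not_ge ?_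
  rw [← Multiset.toFinset_sum_count_eq, mul_comm, ← smul_eq_mul]
  refine card_nsmul_le_sum _ _ _ fun a ha => ?_
  obtain ⟨t, rfl⟩ := Multiset.exists_cons_of_mem (Multiset.mem_toFinset.1 ha)
  have hat : a ∈ t := by_contra fun hat => h a t hat rfl
  have := Multiset.one_le_count_iff_mem.2 hat
  rw [Multiset.count_cons_self]
  omega

variable {n : ℕ} {J K : Type*} [Fintype J] [Fintype K] {c : Multiset J} {b : Multiset K}

open Classical in
/-- The noncrossing partitions of `Fin n` whose classes are labelled by the elements of `c`, the
class labelled `i` having size `c.count i`, and whose Kreweras complements are labelled likewise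
by `b`. -/
noncomputable def labelledPairs (n : ℕ) (c : Multiset J) (b : Multiset K) :
    Finset ((Fin n → J) × (Fin n → K)) :=
  {fg | IsComplementaryPair fg.1 fg.2 ∧ content fg.1 = c ∧ content fg.2 = b}

theorem mem_labelledPairs {fg : (Fin n → J) × (Fin n → K)} :
    fg ∈ labelledPairs n c b ↔
      IsComplementaryPair fg.1 fg.2 ∧ content fg.1 = c ∧ content fg.2 = b := by
  simp [labelledPairs]

theorem labelledPairs_one_singleton (i : J) (m : K) :
    labelledPairs 1 {i} {m} = {(fun _ => i, fun _ => m)} := by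
  ext ⟨f, g⟩
  have hpair : IsComplementaryPair f g := by
    refine ⟨fun p q r s hpq => (hpq.ne (Subsingleton.elim p q)).elim, fun x y => ?_⟩
    simp [Subsingleton.elim x y]
  simp [mem_labelledPairs, content, hpair, funext_iff]

theorem card_labelledPairs_le_swap (n : ℕ) (c : Multiset J) (b : Multiset K) :
    #(labelledPairs (n + 1) c b) ≤ #(labelledPairs (n + 1) b c) := by
  refine card_le_card_of_injOn (fun fg => (fg.2, fg.1 ∘ finRotate (n + 1))) ?_ ?_
  · intro fg hfg
    obtain ⟨h, hc, hb⟩ := mem_labelledPairs.1 hfg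
    exact mem_labelledPairs.2 ⟨h.dual, hb, (content_comp_equiv _ _).trans hc⟩
  · rintro ⟨f, g⟩ - ⟨f', g'⟩ - h
    obtain ⟨hg, hf⟩ := Prod.mk.inj h
    exact Prod.ext ((finRotate (n + 1)).surjective.injective_comp_right hf) hg

theorem card_labelledPairs_swap (n : ℕ) (c : Multiset J) (b : Multiset K) :
    #(labelledPairs (n + 1) c b) = #(labelledPairs (n + 1) b c) :=
  (card_labelledPairs_le_swap n c b).antisymm (card_labelledPairs_le_swap n b c)

section DoubleCounting

variable (c b) (Q : J → K → Prop) [∀ x y, Decidable (Q x y)]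

theorem card_labelledPairs_filter_apply_eq (p q : Fin (n + 1)) :
    #{fg ∈ labelledPairs (n + 1) c b | Q (fg.1 p) (fg.2 p)} =
      #{fg ∈ labelledPairs (n + 1) c b | Q (fg.1 q) (fg.2 q)} := by
  have hle (p q : Fin (n + 1)) :
      #{fg ∈ labelledPairs (n + 1) c b | Q (fg.1 p) (fg.2 p)} ≤
        #{fg ∈ labelledPairs (n + 1) c b | Q (fg.1 q) (fg.2 q)} := by
    refine card_le_card_of_injOn
      (fun fg => (fg.1 ∘ finCycle (p - q), fg.2 ∘ finCycle (p - q))) ?_ ?_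
    · intro fg hfg
      simp only [coe_filter, Set.mem_ofPred_eq, mem_labelledPairs, content_comp_equiv,
        Function.comp_apply, finCycle_apply, add_sub_cancel] at hfg ⊢
      exact ⟨⟨hfg.1.1.comp_finCycle _, hfg.1.2⟩, hfg.2⟩
    · rintro ⟨f, g⟩ - ⟨f', g'⟩ - h
      simpa [(finCycle (p - q)).surjective.injective_comp_right.eq_iff] using h
  exact (hle p q).antisymm (hle q p)

theorem mul_card_labelledPairs_filter_apply (p : Fin (n + 1)) {k : ℕ}
    (hk : ∀ fg ∈ labelledPairs (n + 1) c b, #{x | Q (fg.1 x) (fg.2 x)} = k) :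
    (n + 1) * #{fg ∈ labelledPairs (n + 1) c b | Q (fg.1 p) (fg.2 p)} =
      k * #(labelledPairs (n + 1) c b) := by
  calc (n + 1) * #{fg ∈ labelledPairs (n + 1) c b | Q (fg.1 p) (fg.2 p)}
      = ∑ q : Fin (n + 1), #{fg ∈ labelledPairs (n + 1) c b | Q (fg.1 q) (fg.2 q)} := by
        simp [card_labelledPairs_filter_apply_eq c b Q _ p]
    _ = ∑ fg ∈ labelledPairs (n + 1) c b, #{x | Q (fg.1 x) (fg.2 x)} := by
        simp only [card_filter]
        exact sum_comm
    _ = k * #(labelledPairs (n + 1) c b) := by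
        rw [sum_congr rfl hk, sum_const, smul_eq_mul, mul_comm]

end DoubleCounting

theorem mul_card_labelledPairs_filter_fst_apply [DecidableEq J] (c : Multiset J) (b : Multiset K)
    (p : Fin (n + 1)) (i : J) :
    (n + 1) * #{fg ∈ labelledPairs (n + 1) c b | fg.1 p = i} =
      c.count i * #(labelledPairs (n + 1) c b) :=
  mul_card_labelledPairs_filter_apply c b (fun j _ => j = i) p fun fg hfg => by
    rw [← (mem_labelledPairs.1 hfg).2.1, count_content]

theorem mul_card_labelledPairs_filter_snd_apply [DecidableEq K] (c : Multiset J) (b : Multiset K)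
    (p : Fin (n + 1)) (m : K) :
    (n + 1) * #{fg ∈ labelledPairs (n + 1) c b | fg.2 p = m} =
      b.count m * #(labelledPairs (n + 1) c b) :=
  mul_card_labelledPairs_filter_apply c b (fun _ j => j = m) p fun fg hfg => by
    rw [← (mem_labelledPairs.1 hfg).2.2, count_content]

variable [DecidableEq K]

theorem card_labelledPairs_cons_cons_filter_last [DecidableEq J] {i : J} (hi : i ∉ c) (m : K) :
    #{fg ∈ labelledPairs (n + 2) (i ::ₘ c) (m ::ₘ b) |
        fg.1 (Fin.last (n + 1)) = i ∧ fg.2 (Fin.last (n + 1)) = m} =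
      #{fg ∈ labelledPairs (n + 1) c b | fg.2 (Fin.last n) = m} := by
  have hsnoc (f : Fin (n + 1) → J) (g : Fin (n + 1) → K) :
      (Fin.snoc f i, Fin.snoc g m) ∈ labelledPairs (n + 2) (i ::ₘ c) (m ::ₘ b) ↔
        (f, g) ∈ labelledPairs (n + 1) c b ∧ g (Fin.last n) = m := by
    simp only [mem_labelledPairs, content_snoc, Multiset.cons_inj_right]
    rw [and_right_comm]
    exact and_congr_left fun h => isComplementaryPair_snoc_iff (by rwa [← mem_content, h.1])
  symm
  refine card_bij (fun fg _ => (Fin.snoc fg.1 i, Fin.snoc fg.2 m)) ?_ ?_ ?_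
  · intro fg hfg
    exact mem_filter.2 ⟨(hsnoc _ _).2 (mem_filter.1 hfg), by simp⟩
  · rintro ⟨f, g⟩ - ⟨f', g'⟩ - h
    simpa [Fin.snoc_inj] using h
  · rintro ⟨f, g⟩ hfg
    obtain ⟨h, rfl, rfl⟩ := mem_filter.1 hfg
    refine ⟨(Fin.init f, Fin.init g), mem_filter.2 ((hsnoc _ _).1 ?_), ?_⟩
    · simpa only [Fin.snoc_init_self] using h
    · simp only [Fin.snoc_init_self]

theorem card_labelledPairs_cons {i : J} (hi : i ∉ c) {Y : ℕ}
    (hY : ∀ m b', m ∈ b' → b = m ::ₘ b' → #(labelledPairs (n + 1) c b') = (n + 1) * Y) :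
    #(labelledPairs (n + 2) (i ::ₘ c) b) =
      (n + 2) * ((Multiset.card b - #b.toFinset) * Y) := by
  classical
  have hfiber : ∀ m ∈ b.toFinset, #{fg ∈ labelledPairs (n + 2) (i ::ₘ c) b |
      fg.1 (Fin.last (n + 1)) = i ∧ fg.2 (Fin.last (n + 1)) = m} = (b.count m - 1) * Y := by
    intro m hm
    obtain ⟨b', rfl⟩ := Multiset.exists_cons_of_mem (Multiset.mem_toFinset.1 hm)
    rw [card_labelledPairs_cons_cons_filter_last hi, Multiset.count_cons_self, Nat.add_sub_cancel]
    refine Nat.eq_of_mul_eq_mul_left n.succ_pos ?_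
    rw [Nat.succ_eq_add_one, mul_card_labelledPairs_filter_snd_apply]
    by_cases hmb : m ∈ b'
    · rw [hY m b' hmb rfl, mul_left_comm]
    · simp [hmb]
  have hcount := mul_card_labelledPairs_filter_fst_apply (i ::ₘ c) b (Fin.last (n + 1)) i
  rw [Multiset.count_cons_self, Multiset.count_eq_zero_of_notMem hi, zero_add, one_mul] at hcount
  rw [← hcount, card_eq_sum_card_fiberwise (f := fun fg => fg.2 (Fin.last (n + 1)))
    (t := b.toFinset)]
  · simp only [filter_filter]
    rw [sum_congr rfl hfiber, ← sum_mul, sum_tsub_distrib, Multiset.toFinset_sum_count_eq,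
      ← card_eq_sum_ones]
    exact fun m hm => Multiset.one_le_count_iff_mem.2 (Multiset.mem_toFinset.1 hm)
  · intro fg hfg
    have := (mem_labelledPairs.1 (mem_filter.1 hfg).1).2.2
    simp [← this, mem_content]

theorem card_labelledPairs_cons_of_card_eq [DecidableEq J] {i : J} (hi : i ∉ c)
    (hc : Multiset.card c = n + 1) (hb : Multiset.card b = n + 2)
    (hcb : #c.toFinset + #b.toFinset = n + 2)
    (ih : ∀ b' : Multiset K, Multiset.card b' = n + 1 → #c.toFinset + #b'.toFinset = n + 2 →
      #(labelledPairs (n + 1) c b') = (n + 1) * ((#c.toFinset - 1)! * (#b'.toFinset - 1)!)) :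
    #(labelledPairs (n + 2) (i ::ₘ c) b) = (n + 2) * ((#c.toFinset)! * (#b.toFinset - 1)!) := by
  have hcard : Multiset.card b - #b.toFinset = #c.toFinset := by omega
  have hpos : #c.toFinset ≠ 0 := by
    rw [card_ne_zero, Multiset.toFinset_nonempty, ← Multiset.card_pos, hc]
    exact n.succ_pos
  rw [card_labelledPairs_cons hi (Y := (#c.toFinset - 1)! * (#b.toFinset - 1)!), hcard,
    ← mul_assoc #c.toFinset, Nat.mul_factorial_pred hpos]
  rintro m b' hm rfl
  rw [Multiset.toFinset_cons, insert_eq_of_mem (Multiset.mem_toFinset.2 hm)] at hcb ⊢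
  rw [Multiset.card_cons] at hb
  exact ih b' (by omega) hcb

theorem card_labelledPairs [DecidableEq J] (n : ℕ) (c : Multiset J) (b : Multiset K)
    (hc : Multiset.card c = n + 1) (hb : Multiset.card b = n + 1)
    (hcb : #c.toFinset + #b.toFinset = n + 2) :
    #(labelledPairs (n + 1) c b) = (n + 1) * ((#c.toFinset - 1)! * (#b.toFinset - 1)!) := by
  induction n generalizing c b with
  | zero =>
    obtain ⟨i, rfl⟩ := Multiset.card_eq_one.1 hc
    obtain ⟨m, rfl⟩ := Multiset.card_eq_one.1 hb
    simp [labelledPairs_one_singleton]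
  | succ n ih =>
    rcases lt_or_ge (Multiset.card c) (2 * #c.toFinset) with h | h
    · obtain ⟨i, c, hi, rfl⟩ := exists_eq_cons_notMem h
      rw [Multiset.toFinset_cons, card_insert_of_notMem (by simpa)] at hcb ⊢
      rw [Multiset.card_cons] at hc
      rw [card_labelledPairs_cons_of_card_eq hi (by omega) hb (by omega)
        fun b' hb' => ih c b' (by omega) hb', Nat.add_sub_cancel]
    · obtain ⟨m, b, hm, rfl⟩ := exists_eq_cons_notMem (s := b) (by omega)
      rw [Multiset.toFinset_cons, card_insert_of_notMem (by simpa)] at hcb ⊢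
      rw [Multiset.card_cons] at hb
      rw [card_labelledPairs_swap, card_labelledPairs_cons_of_card_eq hm (by omega) hc (by omega)
        fun c' hc' hcard => ?_, Nat.add_sub_cancel, mul_comm (#b.toFinset)!]
      rw [card_labelledPairs_swap, ih c' b hc' (by omega) (by omega), mul_comm (#b.toFinset - 1)!]

end Counting

section Interlacing

variable {n : ℕ} {J K : Type*}

/-- The position of `x` in the interlaced set `1, 1̄, 2, 2̄, …`. -/
def unbarred (x : Fin n) : Fin (2 * n) :=
  ⟨2 * x, by omega⟩

/-- The position of `x̄` in the interlaced set `1, 1̄, 2, 2̄, …`. -/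
def barred (x : Fin n) : Fin (2 * n) :=
  ⟨2 * x + 1, by omega⟩

/-- The labelling of the interlaced set by `f` on the unbarred and by `g` on the barred points. -/
def interlace (f : Fin n → J) (g : Fin n → K) (z : Fin (2 * n)) : J ⊕ K :=
  if z.val % 2 = 0 then Sum.inl (f (half z)) else Sum.inr (g (half z))

theorem exists_eq_unbarred_or_barred (z : Fin (2 * n)) :
    (∃ x, z = unbarred x) ∨ ∃ x, z = barred x := by
  rcases Nat.mod_two_eq_zero_or_one z with h | h
  · exact Or.inl ⟨half z, Fin.ext (by simp only [unbarred, half]; omega)⟩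
  · exact Or.inr ⟨half z, Fin.ext (by simp only [barred, half]; omega)⟩

theorem unbarred_le_barred {x i : Fin n} : unbarred x ≤ barred i ↔ x ≤ i := by
  simp only [unbarred, barred, Fin.le_def]
  omega

theorem unbarred_lt_barred {x i : Fin n} : unbarred x < barred i ↔ x ≤ i := by
  simp only [unbarred, barred, Fin.le_def, Fin.lt_def]
  omega

theorem barred_lt_unbarred {x i : Fin n} : barred i < unbarred x ↔ i < x := by
  simp only [unbarred, barred, Fin.lt_def]
  omega

theorem unbarred_strictMono : StrictMono (unbarred : Fin n → Fin (2 * n)) := by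
  intro x y h
  simp only [unbarred, Fin.lt_def] at *
  omega

theorem barred_strictMono : StrictMono (barred : Fin n → Fin (2 * n)) := by
  intro x y h
  simp only [barred, Fin.lt_def] at *
  omega

theorem interlace_unbarred (f : Fin n → J) (g : Fin n → K) (x : Fin n) :
    interlace f g (unbarred x) = Sum.inl (f x) := by
  simp [interlace, unbarred, half]

theorem interlace_barred (f : Fin n → J) (g : Fin n → K) (x : Fin n) :
    interlace f g (barred x) = Sum.inr (g x) := by
  have : (2 * x.val + 1) / 2 = x := by omega
  simp [interlace, barred, half, Nat.add_mod, this]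

theorem isNoncrossingLabelling_interlace_iff {f : Fin n → J} {g : Fin n → K} :
    IsNoncrossingLabelling (interlace f g) ↔
      IsNoncrossingLabelling f ∧ IsNoncrossingLabelling g ∧
        ∀ x y i j, f x = f y → g i = g j → Uncrossed x y i j := by
  constructor
  · refine fun h => ⟨fun p q r s hpq hqr hrs => ?_, fun p q r s hpq hqr hrs => ?_,
      fun x y i j hxy hij => ?_⟩
    · simpa [interlace_unbarred] using h _ _ _ _ (unbarred_strictMono hpq)
        (unbarred_strictMono hqr) (unbarred_strictMono hrs)
    · simpa [interlace_barred] using h _ _ _ _ (barred_strictMono hpq)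
        (barred_strictMono hqr) (barred_strictMono hrs)
    · have := h.uncrossed (x := unbarred x) (y := unbarred y) (z := barred i) (w := barred j)
      simpa [interlace_unbarred, interlace_barred, hxy, hij, Uncrossed, unbarred_le_barred]
        using this
  · rintro ⟨hf, hg, hfg⟩ p q r s hpq hqr hrs hpr hqs
    rcases exists_eq_unbarred_or_barred p with ⟨p, rfl⟩ | ⟨p, rfl⟩ <;>
    rcases exists_eq_unbarred_or_barred q with ⟨q, rfl⟩ | ⟨q, rfl⟩ <;>
    rcases exists_eq_unbarred_or_barred r with ⟨r, rfl⟩ | ⟨r, rfl⟩ <;>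
    rcases exists_eq_unbarred_or_barred s with ⟨s, rfl⟩ | ⟨s, rfl⟩ <;>
    simp only [interlace_unbarred, interlace_barred, Sum.inl.injEq, Sum.inr.injEq, reduceCtorEq,
      unbarred_strictMono.lt_iff_lt, barred_strictMono.lt_iff_lt, unbarred_lt_barred,
      barred_lt_unbarred] at *
    · exact hf p q r s hpq hqr hrs hpr hqs
    · have := hfg p r q s hpr hqs
      unfold Uncrossed at this
      grind
    · have := hfg q s p r hqs hpr
      unfold Uncrossed at this
      grind
    · exact hg p q r s hpq hqr hrs hpr hqs

end Interlacing

section Part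

variable {α : Type*} [DecidableEq α] [Fintype α]

theorem part_eq_part_iff {P : Finpartition (Finset.univ : Finset α)} {x y : α} :
    P.part x = P.part y ↔ ∃ B ∈ P.parts, x ∈ B ∧ y ∈ B := by
  rw [← P.mem_part_iff_part_eq_part (Finset.mem_univ x) (Finset.mem_univ y),
    P.mem_part_iff_exists]

theorem part_ofSetoid_eq_part_ofSetoid_iff {s : Setoid α} [DecidableRel s.r] {x y : α} :
    (Finpartition.ofSetoid s).part x = (Finpartition.ofSetoid s).part y ↔ s x y := by
  rw [← Finpartition.mem_part_iff_part_eq_part _ (Finset.mem_univ x) (Finset.mem_univ y),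
    Finpartition.mem_part_ofSetoid_iff_rel, s.comm']

theorem le_iff_part_eq_part {P Q : Finpartition (Finset.univ : Finset α)} :
    P ≤ Q ↔ ∀ x y, P.part x = P.part y → Q.part x = Q.part y := by
  constructor
  · intro h x y hxy
    obtain ⟨B, hB, hx, hy⟩ := part_eq_part_iff.1 hxy
    obtain ⟨C, hC, hBC⟩ := h hB
    exact part_eq_part_iff.2 ⟨C, hC, hBC hx, hBC hy⟩
  · intro h B hB
    obtain ⟨x, hx⟩ := P.nonempty_of_mem_parts hB
    refine ⟨Q.part x, Q.part_mem.2 (Finset.mem_univ x), fun y hy => ?_⟩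
    rw [Q.mem_part_iff_part_eq_part (Finset.mem_univ y) (Finset.mem_univ x)]
    exact h y x (part_eq_part_iff.2 ⟨B, hB, hy, hx⟩)

theorem eq_of_part_eq_part_iff {P Q : Finpartition (Finset.univ : Finset α)}
    (h : ∀ x y, P.part x = P.part y ↔ Q.part x = Q.part y) : P = Q :=
  le_antisymm (le_iff_part_eq_part.2 fun x y => (h x y).1)
    (le_iff_part_eq_part.2 fun x y => (h x y).2)

end Part

section KrewerasComplement

variable {n : ℕ} {P Q : Finpartition (Finset.univ : Finset (Fin n))}

theorem refines_iff_part_eq_part :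
    Refines P Q ↔ ∀ x y, P.part x = P.part y → Q.part x = Q.part y :=
  le_iff_part_eq_part (P := P) (Q := Q)

theorem isNoncrossing_iff_part : IsNoncrossing P ↔ IsNoncrossingLabelling P.part := by
  constructor
  · intro h p q r s hpq hqr hrs hpr hqs
    obtain ⟨B, hB, hp, hr⟩ := part_eq_part_iff.1 hpr
    obtain ⟨C, hC, hq, hs⟩ := part_eq_part_iff.1 hqs
    by_contra hne
    refine h ⟨p, q, r, s, hpq, hqr, hrs, B, hB, C, hC, ?_, hp, hr, hq, hs⟩
    rintro rfl
    exact hne (part_eq_part_iff.2 ⟨B, hB, hp, hq⟩)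
  · rintro h ⟨p, q, r, s, hpq, hqr, hrs, B, hB, C, hC, hne, hp, hr, hq, hs⟩
    have := h p q r s hpq hqr hrs (part_eq_part_iff.2 ⟨B, hB, hp, hr⟩)
      (part_eq_part_iff.2 ⟨C, hC, hq, hs⟩)
    rw [P.part_eq_of_mem hB hp, P.part_eq_of_mem hC hq] at this
    exact hne this

theorem togetherIn_iff_interlace_part {x y : Fin (2 * n)} :
    togetherIn P Q x y ↔ interlace P.part Q.part x = interlace P.part Q.part y := by
  rcases Nat.mod_two_eq_zero_or_one x with hx | hx <;>
  rcases Nat.mod_two_eq_zero_or_one y with hy | hy <;>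
  simp [togetherIn, interlace, ← part_eq_part_iff, hx, hy]

theorem interlacedNoncrossing_iff_interlace_part :
    InterlacedNoncrossing P Q ↔ IsNoncrossingLabelling (interlace P.part Q.part) := by
  simp only [InterlacedNoncrossing, togetherIn_iff_interlace_part, IsNoncrossingLabelling,
    not_exists, not_and, not_not]

theorem interlacedNoncrossing_iff_krewerasSetoid (hP : IsNoncrossing P) (hQ : IsNoncrossing Q) :
    InterlacedNoncrossing P Q ↔
      ∀ i j, Q.part i = Q.part j → krewerasSetoid P.part i j := by
  rw [interlacedNoncrossing_iff_interlace_part, isNoncrossingLabelling_interlace_iff,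
    and_iff_right (isNoncrossing_iff_part.1 hP), and_iff_right (isNoncrossing_iff_part.1 hQ)]
  exact ⟨fun h i j hij x y hxy => h x y i j hxy hij, fun h x y i j hxy hij => h i j hij x y hxy⟩

theorem isKreweras_iff_part (hP : IsNoncrossing P) :
    IsKreweras P Q ↔ ∀ i j, Q.part i = Q.part j ↔ krewerasSetoid P.part i j := by
  classical
  constructor
  · rintro ⟨hQ, hPQ, hmax⟩ i j
    refine ⟨(interlacedNoncrossing_iff_krewerasSetoid hP hQ).1 hPQ i j, fun hij => ?_⟩
    let R := Finpartition.ofSetoid (krewerasSetoid P.part)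
    have hR (i j : Fin n) : R.part i = R.part j ↔ krewerasSetoid P.part i j :=
      part_ofSetoid_eq_part_ofSetoid_iff
    have hRN : IsNoncrossing R := isNoncrossing_iff_part.2 (isNoncrossingLabelling_of_eq_iff hR)
    have hPR := (interlacedNoncrossing_iff_krewerasSetoid hP hRN).2 fun i j => (hR i j).1
    exact refines_iff_part_eq_part.1 (hmax R hRN hPR) i j ((hR i j).2 hij)
  · intro h
    have hQ : IsNoncrossing Q := isNoncrossing_iff_part.2 (isNoncrossingLabelling_of_eq_iff h)
    refine ⟨hQ, (interlacedNoncrossing_iff_krewerasSetoid hP hQ).2 fun i j => (h i j).1,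
      fun R hR hPR => refines_iff_part_eq_part.2 fun i j hij => (h i j).2 ?_⟩
    exact (interlacedNoncrossing_iff_krewerasSetoid hP hR).1 hPR i j hij

theorem isComplementaryPair_part_iff :
    IsComplementaryPair P.part Q.part ↔ IsNoncrossing P ∧ IsKreweras P Q := by
  constructor
  · intro h
    have hP := isNoncrossing_iff_part.2 h.noncrossing
    exact ⟨hP, (isKreweras_iff_part hP).2 h.eq_iff⟩
  · rintro ⟨hP, hPQ⟩
    exact ⟨isNoncrossing_iff_part.1 hP, (isKreweras_iff_part hP).1 hPQ⟩

end KrewerasComplement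

section Labellings

open Finset

theorem exists_equiv_comp_eq_s18 {I J : Type*} [Fintype I] [Fintype J] {d : I → ℕ} {c : J → ℕ}
    (h : univ.val.map d = univ.val.map c) : ∃ e : I ≃ J, c ∘ e = d := by
  have hcard (k : ℕ) : Nonempty ({i // d i = k} ≃ {j // c j = k}) := by
    rw [← Fintype.card_eq, Fintype.card_subtype, Fintype.card_subtype]
    have := congrArg (Multiset.count k) h
    simp only [Multiset.count_map, eq_comm (a := k)] at this
    exact this
  let e (k : ℕ) := (hcard k).some
  exact ⟨Equiv.ofFiberEquiv e, funext (Equiv.ofFiberEquiv_map e)⟩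

theorem card_perm_comp_eq {J : Type*} [Fintype J] [DecidableEq J] (c : J → ℕ) :
    Fintype.card {e : Equiv.Perm J // c ∘ e = c} = fMult (univ.val.map c) := by
  rw [DomMulAct.stabilizer_card', fMult]
  refine prod_congr (by ext; simp) fun k _ => ?_
  rw [Multiset.count_map, Fintype.card_subtype]
  simp only [eq_comm (a := k)]
  rfl

theorem card_equiv_comp_eq {I J : Type*} [Fintype I] [Fintype J] [DecidableEq I] [DecidableEq J]
    {d : I → ℕ} {c : J → ℕ} (h : univ.val.map d = univ.val.map c) :
    Fintype.card {e : I ≃ J // c ∘ e = d} = fMult (univ.val.map c) := by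
  obtain ⟨e₀, rfl⟩ := exists_equiv_comp_eq_s18 h
  rw [← card_perm_comp_eq]
  refine Fintype.card_congr ((Equiv.equivCongr e₀ (Equiv.refl J)).subtypeEquiv fun e => ?_)
  rw [← e₀.surjective.injective_comp_right.eq_iff]
  simp [funext_iff]

variable {n : ℕ} {J K : Type*}

/-- The class of `x`, as an element of the type of classes. -/
def partOf (P : Finpartition (univ : Finset (Fin n))) (x : Fin n) : P.parts :=
  ⟨P.part x, P.part_mem.2 (mem_univ x)⟩

open Classical in
/-- The partition of `Fin n` into the nonempty fibres of `f`. -/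
noncomputable def fibrePartition (f : Fin n → J) : Finpartition (univ : Finset (Fin n)) :=
  Finpartition.ofSetoid (Setoid.ker f)

theorem partOf_eq_iff {P : Finpartition (univ : Finset (Fin n))} {x : Fin n} {B : P.parts} :
    partOf P x = B ↔ x ∈ B.1 := by
  rw [partOf, Subtype.ext_iff]
  exact P.part_eq_iff_mem B.2

theorem partOf_eq_partOf_iff {P : Finpartition (univ : Finset (Fin n))} {x y : Fin n} :
    partOf P x = partOf P y ↔ P.part x = P.part y :=
  Subtype.mk_eq_mk

theorem partOf_surjective (P : Finpartition (univ : Finset (Fin n))) :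
    Function.Surjective (partOf P) := fun B =>
  (P.nonempty_of_mem_parts B.2).imp fun _ => partOf_eq_iff.2

theorem partSizes_eq_map (P : Finpartition (univ : Finset (Fin n))) :
    partSizes P = univ.val.map fun B : P.parts => #B.1 :=
  (Multiset.attach_map_val' P.parts.val Finset.card).symm

theorem part_fibrePartition_eq_iff {f : Fin n → J} {x y : Fin n} :
    (fibrePartition f).part x = (fibrePartition f).part y ↔ f x = f y := by
  classical
  exact part_ofSetoid_eq_part_ofSetoid_iff

theorem fibrePartition_equiv_comp_partOf {P : Finpartition (univ : Finset (Fin n))}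
    (e : P.parts ≃ J) : fibrePartition (e ∘ partOf P) = P :=
  eq_of_part_eq_part_iff fun x y => by
    rw [part_fibrePartition_eq_iff, Function.comp_apply, Function.comp_apply,
      e.injective.eq_iff, partOf_eq_partOf_iff]

theorem exists_equiv_comp_partOf_eq {f : Fin n → J} (hf : Function.Surjective f) :
    ∃ e : (fibrePartition f).parts ≃ J, e ∘ partOf (fibrePartition f) = f := by
  let s := Function.surjInv (partOf_surjective (fibrePartition f))
  have hs : ∀ B, partOf (fibrePartition f) (s B) = B := Function.surjInv_eq _
  have hfs (x : Fin n) : f (s (partOf (fibrePartition f) x)) = f x :=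
    part_fibrePartition_eq_iff.1 (partOf_eq_partOf_iff.1 (hs _))
  have hbij : Function.Bijective (f ∘ s) := by
    refine ⟨fun B C h => ?_, fun i => ?_⟩
    · rw [← hs B, ← hs C]
      exact partOf_eq_partOf_iff.2 (part_fibrePartition_eq_iff.2 h)
    · obtain ⟨x, rfl⟩ := hf i
      exact ⟨_, hfs x⟩
  exact ⟨Equiv.ofBijective _ hbij, funext hfs⟩

theorem count_content_equiv_comp_partOf [DecidableEq J]
    {P : Finpartition (univ : Finset (Fin n))} (e : P.parts ≃ J) (B : P.parts) :
    (content (e ∘ partOf P)).count (e B) = #B.1 := by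
  simp [count_content, partOf_eq_iff]

theorem content_equiv_comp_partOf_eq_iff [DecidableEq J]
    {P : Finpartition (univ : Finset (Fin n))} {c : Multiset J}
    (e : P.parts ≃ J) :
    content (e ∘ partOf P) = c ↔ c.count ∘ e = fun B => #B.1 := by
  rw [eq_comm, Multiset.ext, ← e.forall_congr_right, funext_iff]
  simp only [count_content_equiv_comp_partOf, Function.comp_apply]

theorem surjective_of_content_eq {c : Multiset J} (hc : ∀ i, i ∈ c) {f : Fin n → J}
    (hf : content f = c) : Function.Surjective f := fun i =>
  mem_content.1 (hf ▸ hc i)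

theorem isComplementaryPair_part_fibrePartition_iff {f : Fin n → J} {g : Fin n → K} :
    IsComplementaryPair (fibrePartition f).part (fibrePartition g).part ↔
      IsComplementaryPair f g :=
  ⟨fun h => h.congr (fun _ _ => part_fibrePartition_eq_iff) fun _ _ => part_fibrePartition_eq_iff,
    fun h => h.congr (fun _ _ => part_fibrePartition_eq_iff.symm)
      fun _ _ => part_fibrePartition_eq_iff.symm⟩

theorem partSizes_fibrePartition [Fintype J] [DecidableEq J] {f : Fin n → J}
    (hf : Function.Surjective f) :
    partSizes (fibrePartition f) = univ.val.map (content f).count := by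
  obtain ⟨e, he⟩ := exists_equiv_comp_partOf_eq hf
  rw [partSizes_eq_map, ← Multiset.map_univ_val_equiv e, Multiset.map_map]
  refine congrArg (univ.val.map ·) (funext fun B => ?_)
  rw [← count_content_equiv_comp_partOf e, he, Function.comp_apply]

theorem card_filter_fibrePartition_eq [Fintype J] [DecidableEq J]
    {P : Finpartition (univ : Finset (Fin n))} {c : Multiset J} (hc : ∀ i, i ∈ c)
    (hP : partSizes P = univ.val.map c.count) :
    #{f : Fin n → J | fibrePartition f = P ∧ content f = c} = fMult (partSizes P) := by
  rw [hP, ← card_equiv_comp_eq (partSizes_eq_map P ▸ hP), Fintype.card_subtype]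
  symm
  refine card_bij (fun e _ => e ∘ partOf P) ?_ ?_ ?_
  · intro e he
    rw [mem_filter_univ] at he ⊢
    exact ⟨fibrePartition_equiv_comp_partOf e, (content_equiv_comp_partOf_eq_iff e).2 he⟩
  · exact fun e _ e' _ h => DFunLike.coe_injective ((partOf_surjective P).injective_comp_right h)
  · intro f hf
    obtain ⟨rfl, hfc⟩ := (mem_filter_univ f).1 hf
    obtain ⟨e, he⟩ := exists_equiv_comp_partOf_eq (surjective_of_content_eq hc hfc)
    refine ⟨e, (mem_filter_univ e).2 ((content_equiv_comp_partOf_eq_iff e).1 ?_), he⟩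
    rw [he, hfc]

open Classical in
/-- The pairs consisting of a noncrossing partition of `Fin n` with class sizes `s` and its
Kreweras complement, the latter having class sizes `t`. -/
noncomputable def krewerasPairs (n : ℕ) (s t : Multiset ℕ) :
    Finset (Finpartition (univ : Finset (Fin n)) × Finpartition (univ : Finset (Fin n))) :=
  {PQ | IsComplementaryPair PQ.1.part PQ.2.part ∧ partSizes PQ.1 = s ∧ partSizes PQ.2 = t}

theorem mem_krewerasPairs {s t : Multiset ℕ}
    {PQ : Finpartition (univ : Finset (Fin n)) × Finpartition (univ : Finset (Fin n))} :
    PQ ∈ krewerasPairs n s t ↔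
      IsComplementaryPair PQ.1.part PQ.2.part ∧ partSizes PQ.1 = s ∧ partSizes PQ.2 = t := by
  simp [krewerasPairs]

theorem card_krewerasPairs (n : ℕ) (s t : Multiset ℕ) :
    #(krewerasPairs n s t) = Nat.card {P : Finpartition (univ : Finset (Fin n)) //
      IsNoncrossing P ∧ partSizes P = s ∧ ∃ Q, IsKreweras P Q ∧ partSizes Q = t} := by
  classical
  rw [Nat.card_eq_fintype_card, Fintype.card_subtype]
  refine card_bij (fun PQ _ => PQ.1) ?_ ?_ ?_
  · intro PQ hPQ
    obtain ⟨h, hs, ht⟩ := mem_krewerasPairs.1 hPQ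
    obtain ⟨hP, hK⟩ := isComplementaryPair_part_iff.1 h
    exact (mem_filter_univ _).2 ⟨hP, hs, PQ.2, hK, ht⟩
  · rintro ⟨P, Q⟩ h ⟨P', Q'⟩ h' rfl
    have hQ := (mem_krewerasPairs.1 h).1.eq_iff
    have hQ' := (mem_krewerasPairs.1 h').1.eq_iff
    exact Prod.ext rfl (eq_of_part_eq_part_iff fun x y => (hQ x y).trans (hQ' x y).symm)
  · intro P hP
    obtain ⟨hP, hs, Q, hK, ht⟩ := (mem_filter_univ _).1 hP
    exact ⟨(P, Q), mem_krewerasPairs.2 ⟨isComplementaryPair_part_iff.2 ⟨hP, hK⟩, hs, ht⟩, rfl⟩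

theorem card_labelledPairs_eq_card_krewerasPairs_mul [Fintype J] [Fintype K] [DecidableEq J]
    [DecidableEq K] {c : Multiset J} {b : Multiset K} (hc : ∀ i, i ∈ c) (hb : ∀ m, m ∈ b)
    {s t : Multiset ℕ} (hs : univ.val.map c.count = s) (ht : univ.val.map b.count = t) :
    #(labelledPairs n c b) = #(krewerasPairs n s t) * (fMult s * fMult t) := by
  rw [card_eq_sum_card_fiberwise (t := krewerasPairs n s t)
    (f := fun fg => (fibrePartition fg.1, fibrePartition fg.2)), sum_const_nat]
  · rintro ⟨P, Q⟩ hPQ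
    obtain ⟨h, rfl, rfl⟩ := mem_krewerasPairs.1 hPQ
    rw [← card_filter_fibrePartition_eq hc hs.symm, ← card_filter_fibrePartition_eq hb ht.symm,
      ← card_product]
    congr 1
    ext ⟨f, g⟩
    simp only [mem_filter, mem_labelledPairs, mem_product, mem_univ, true_and, Prod.mk.injEq]
    constructor
    · rintro ⟨⟨-, hf, hg⟩, hP, hQ⟩
      exact ⟨⟨hP, hf⟩, hQ, hg⟩
    · rintro ⟨⟨rfl, hf⟩, rfl, hg⟩
      exact ⟨⟨isComplementaryPair_part_fibrePartition_iff.1 h, hf, hg⟩, rfl, rfl⟩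
  · rintro ⟨f, g⟩ hfg
    obtain ⟨h, hf, hg⟩ := mem_labelledPairs.1 hfg
    refine mem_krewerasPairs.2 ⟨isComplementaryPair_part_fibrePartition_iff.2 h, ?_, ?_⟩
    · rw [partSizes_fibrePartition (surjective_of_content_eq hc hf), hf, hs]
    · rw [partSizes_fibrePartition (surjective_of_content_eq hb hg), hg, ht]

end Labellings

section Main

open Finset
open scoped Nat

theorem fMult_pos (s : Multiset ℕ) : 0 < fMult s :=
  prod_pos fun _ _ => Nat.factorial_pos _

theorem exists_multiset_map_count_eq {s : Multiset ℕ} (hs : ∀ k ∈ s, 0 < k) :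
    ∃ (J : Type) (_ : Fintype J) (_ : DecidableEq J) (c : Multiset J),
      (∀ i, i ∈ c) ∧ univ.val.map c.count = s := by
  classical
  let c : Multiset s := ∑ i : s, Multiset.replicate i.1 i
  have hcount (i : s) : c.count i = i.1 := by
    simp [c, Multiset.count_sum', Multiset.count_replicate]
  refine ⟨s, inferInstance, inferInstance, c, fun i => ?_, ?_⟩
  · rw [← Multiset.one_le_count_iff_mem, hcount]
    exact hs _ Multiset.coe_mem
  · rw [funext hcount]
    exact Multiset.map_univ_coe s

theorem card_eq_sum_map_count {L : Type*} [Fintype L] [DecidableEq L] (c : Multiset L) :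
    Multiset.card c = (univ.val.map c.count).sum :=
  (Multiset.sum_count_eq_card fun i _ => mem_univ i).symm

theorem card_toFinset_eq_card_map_count {L : Type*} [Fintype L] [DecidableEq L] {c : Multiset L}
    (hc : ∀ i, i ∈ c) : #c.toFinset = Multiset.card (univ.val.map c.count) := by
  rw [eq_univ_of_forall fun i => Multiset.mem_toFinset.2 (hc i), Multiset.card_map, card_def]

theorem card_krewerasPairs_mul {n : ℕ} (c b : (n + 1).Partition)
    (h : Multiset.card c.parts + Multiset.card b.parts = n + 2) :
    #(krewerasPairs (n + 1) c.parts b.parts) * (fMult c.parts * fMult b.parts) =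
      (n + 1) * ((Multiset.card c.parts - 1)! * (Multiset.card b.parts - 1)!) := by
  obtain ⟨J, _, _, c', hc', hcs⟩ := exists_multiset_map_count_eq fun _ => c.parts_pos
  obtain ⟨K, _, _, b', hb', hbs⟩ := exists_multiset_map_count_eq fun _ => b.parts_pos
  have hc : #c'.toFinset = Multiset.card c.parts := by
    rw [card_toFinset_eq_card_map_count hc', hcs]
  have hb : #b'.toFinset = Multiset.card b.parts := by
    rw [card_toFinset_eq_card_map_count hb', hbs]
  rw [← card_labelledPairs_eq_card_krewerasPairs_mul hc' hb' hcs hbs, ← hc, ← hb]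
  refine card_labelledPairs n c' b' ?_ ?_ (by rw [hc, hb, h])
  · rw [card_eq_sum_map_count, hcs, c.parts_sum]
  · rw [card_eq_sum_map_count, hbs, b.parts_sum]

theorem card_noncrossing_with_kreweras_type_general {n : ℕ} (c b : n.Partition)
    (h : Multiset.card c.parts + Multiset.card b.parts = n + 1) :
    (Nat.card {P : Finpartition (univ : Finset (Fin n)) //
        IsNoncrossing P ∧ partSizes P = c.parts ∧
          ∃ Q, IsKreweras P Q ∧ partSizes Q = b.parts} : ℚ) =
      (n * (Multiset.card b.parts - 1)! * (Multiset.card c.parts - 1)!) /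
        (fMult b.parts * fMult c.parts) := by
  obtain _ | n := n
  · simp [Subsingleton.elim c default, Subsingleton.elim b default] at h
  have hb := fMult_pos b.parts
  have hc := fMult_pos c.parts
  rw [eq_div_iff (by positivity), ← card_krewerasPairs, mul_comm (fMult b.parts : ℚ), mul_assoc,
    mul_comm ((_ - 1)! : ℚ)]
  exact_mod_cast card_krewerasPairs_mul c b h

/-- The class sizes of `P`, as a partition of the number `n`. -/
def sizePartition {n : ℕ} (P : Finpartition (univ : Finset (Fin n))) : n.Partition where
  parts := partSizes P
  parts_pos {k} hk := by
    obtain ⟨B, hB, rfl⟩ := Multiset.mem_map.1 hk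
    exact (P.nonempty_of_mem_parts hB).card_pos
  parts_sum := by
    simpa [partSizes] using P.sum_card_parts

end Main

/-- For a noncrossing partition `π₀` of `{1,…,n}` with class-size multiset
`{c₁ ≥ ⋯ ≥ c_j}` whose Kreweras complement has class-size multiset
`{b₁ ≥ ⋯ ≥ b_{n-j+1}}`, the number of noncrossing partitions of `{1,…,n}` with exactly
these two data equals `n·(n-j)!·(j-1)! / (f(b₁,…,b_{n-j+1})·f(c₁,…,c_j))`. -/
theorem card_noncrossing_with_kreweras_type (n j : ℕ) (hn : 1 ≤ n)
    (hj : 1 ≤ j) (hjn : j ≤ n)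
    (c : Fin j → ℕ) (b : Fin (n - j + 1) → ℕ)
    (hcpos : ∀ r, 1 ≤ c r) (hcmono : ∀ r s : Fin j, r ≤ s → c s ≤ c r)
    (hbpos : ∀ r, 1 ≤ b r)
    (hbmono : ∀ r s : Fin (n - j + 1), r ≤ s → b s ≤ b r)
    (π₀ σ₀ : Finpartition (Finset.univ : Finset (Fin n)))
    (hπ₀ : IsNoncrossing π₀) (hk₀ : IsKreweras π₀ σ₀)
    (hc₀ : partSizes π₀ = Multiset.map c Finset.univ.val)
    (hb₀ : partSizes σ₀ = Multiset.map b Finset.univ.val) :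
    (Nat.card {P : Finpartition (Finset.univ : Finset (Fin n)) //
        IsNoncrossing P ∧ partSizes P = Multiset.map c Finset.univ.val ∧
          ∃ σ, IsKreweras P σ ∧ partSizes σ = Multiset.map b Finset.univ.val} : ℚ) =
      ((n : ℚ) * ((n - j).factorial : ℚ) * ((j - 1).factorial : ℚ)) /
        ((fMult (Multiset.map b Finset.univ.val) : ℚ) *
          (fMult (Multiset.map c Finset.univ.val) : ℚ)) := by
  have h := card_noncrossing_with_kreweras_type_general (sizePartition π₀) (sizePartition σ₀)
    (by simp only [sizePartition, hc₀, hb₀, Multiset.card_map, Finset.card_val, Finset.card_fin]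
        omega)
  simpa [sizePartition, hc₀, hb₀] using h
end
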